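/- Let $P_1$ and $P_2$ be two-dimensional lattice polygons in $\mathbb{R}^2$ and let $\Delta_1$ and $\Delta_2$ be regular subdivisions of $P_1$ and $P_2$ respectively. Suppose that $P_1 \cap P_2$ is a segment $[p,q]$ of lattice length $1$ with $p, q \in \mathbb{Z}^2$, that $[p,q]$ is an edge of both $P_1$ and $P_2$, and that $P_3 := P_1 \cup P_2$ is convex. Then $\Delta_3 := \Delta_1 \cup \Delta_2$ is a regular subdivision of $P_3$. -/

import Mathlib

/-- A point of `ℝ × ℝ` is a lattice point if both coordinates are integers. -/
def IsLatticePoint (x : ℝ × ℝ) : Prop := ∃ a b : ℤ, x = ((a : ℝ), (b : ℝ))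

/-- `A(P)`: the set of lattice points of `P`. -/
def latticePoints (P : Set (ℝ × ℝ)) : Set (ℝ × ℝ) := {x ∈ P | IsLatticePoint x}

/-- A lattice polygon: the convex hull of a finite set of lattice points. -/
def IsLatticePolygon (P : Set (ℝ × ℝ)) : Prop :=
  ∃ S : Finset (ℝ × ℝ), (∀ x ∈ S, IsLatticePoint x) ∧ P = convexHull ℝ (S : Set (ℝ × ℝ))

/-- The cells of the subdivision induced by a height function `h` on the point set `A`:
the two-dimensional sets of the form `conv {x ∈ A | ℓ x = h x}` where `ℓ` is an affine
map with `ℓ ≤ h` on `A`. -/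
def inducedCells (A : Set (ℝ × ℝ)) (h : ℝ × ℝ → ℝ) : Set (Set (ℝ × ℝ)) :=
  { C | (∃ ℓ : (ℝ × ℝ) →ᵃ[ℝ] ℝ, (∀ x ∈ A, ℓ x ≤ h x) ∧
      C = convexHull ℝ {x ∈ A | ℓ x = h x}) ∧ ¬ Collinear ℝ C }

/-- A subdivision of a two-dimensional lattice polygon `P`: a finite collection of
two-dimensional lattice polygons covering `P`, any two of which meet in a common
(possibly empty) face of each. -/
def IsSubdivision (P : Set (ℝ × ℝ)) (Δ : Set (Set (ℝ × ℝ))) : Prop :=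
  Δ.Finite ∧
  (∀ C ∈ Δ, IsLatticePolygon C ∧ ¬ Collinear ℝ C) ∧
  ⋃₀ Δ = P ∧
  ∀ C ∈ Δ, ∀ D ∈ Δ, IsExposed ℝ C (C ∩ D) ∧ IsExposed ℝ D (C ∩ D)

/-- A regular subdivision: one induced by some height function on the lattice points. -/
def IsRegularSubdivision (P : Set (ℝ × ℝ)) (Δ : Set (Set (ℝ × ℝ))) : Prop :=
  IsSubdivision P Δ ∧ ∃ h : ℝ × ℝ → ℝ, Δ = inducedCells (latticePoints P) h

/-- The segment `[p,q]` is an edge of the convex polygon `P`: it is contained in `P` and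
there is an affine map vanishing on `[p,q]` and strictly positive on `P \ [p,q]`. -/
def IsEdgeSeg (P : Set (ℝ × ℝ)) (p q : ℝ × ℝ) : Prop :=
  segment ℝ p q ⊆ P ∧
  ∃ f : (ℝ × ℝ) →ᵃ[ℝ] ℝ, (∀ x ∈ segment ℝ p q, f x = 0) ∧
    (∀ x ∈ P \ segment ℝ p q, 0 < f x)

/-- The segment between the lattice points `p ≠ q` has lattice length one: `p` and `q` are
the only lattice points it contains. -/
def LatticeLengthOne (p q : ℝ × ℝ) : Prop :=
  p ≠ q ∧ IsLatticePoint p ∧ IsLatticePoint q ∧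
    ∀ x ∈ segment ℝ p q, IsLatticePoint x → x = p ∨ x = q

open Set Filter MeasureTheory

/-! Shifting a height function by an affine map does not change the cells, and the edge contains
only two lattice points, at which an affine map can take any two values; so both subdivisions come
from one height function `h`. Let `f` be affine, zero on the edge, positive on the rest of `P₁`,
hence negative on the rest of `P₂`. Adding `N * |f|` to `h` shifts the heights over each polygon
by an affine map, `N * f` over `P₁` and `-N * f` over `P₂`, and for large `N` it leaves the
lattice points across the edge strictly above each of the finitely many supporting planes. So
every old cell is a cell for `h + N * |f|`. The old cells already cover `P₁ ∪ P₂`; a further cell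
would overlap one of them in a two-dimensional set, where the two supporting planes would have to
agree. -/

section LowerFace

variable {E : Type*} [AddCommGroup E] [Module ℝ E] {A B : Set E} {h h' : E → ℝ}
  {f ℓ m : E →ᵃ[ℝ] ℝ} {x : E}

/-- The projection to `E` of the face of the lifted point set `{(x, h x) | x ∈ A}` cut out by the
graph of `ℓ`. It is a face of the lower convex hull only if `ℓ ≤ h` on `A`, which is not part of the
definition. -/
def lowerFace (A : Set E) (h : E → ℝ) (ℓ : E →ᵃ[ℝ] ℝ) : Set E :=
  convexHull ℝ {x ∈ A | ℓ x = h x}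

lemma lowerFace_subset_convexHull : lowerFace A h ℓ ⊆ convexHull ℝ A :=
  convexHull_mono (sep_subset _ _)

lemma lowerFace_congr (hh : EqOn h h' A) : lowerFace A h ℓ = lowerFace A h' ℓ :=
  congrArg _ <| ext fun _ => and_congr_right fun hx => by rw [hh hx]

lemma lowerFace_add_affineMap : lowerFace A (h + f) (ℓ + f) = lowerFace A h ℓ := by
  simp only [lowerFace, AffineMap.coe_add, Pi.add_apply, add_left_inj]

lemma lowerFace_union_of_lt (hB : ∀ x ∈ B \ A, ℓ x < h x) :
    lowerFace (A ∪ B) h ℓ = lowerFace A h ℓ := by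
  refine congrArg (convexHull ℝ) (Subset.antisymm ?_ fun x hx => ⟨Or.inl hx.1, hx.2⟩)
  rintro x ⟨hx, hℓx⟩
  by_contra hxA
  have hxB : x ∈ B \ A := ⟨hx.resolve_left fun hA => hxA ⟨hA, hℓx⟩, fun hA => hxA ⟨hA, hℓx⟩⟩
  exact (hB x hxB).ne hℓx

lemma lt_or_mem_convexHull_of_forall_le {c : ℝ} (hA : ∀ y ∈ A, f y ≤ c)
    (hx : x ∈ convexHull ℝ A) : f x < c ∨ x ∈ convexHull ℝ {y ∈ A | f y = c} := by
  set F := convexHull ℝ {y ∈ A | f y = c}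
  have hF : ∀ y ∈ F, f y = c :=
    convexHull_min (fun y hy => hy.2) ((convex_singleton c).affine_preimage f)
  have hle : ∀ y ∈ {y | f y < c} ∪ F, f y ≤ c := fun y hy =>
    hy.elim (fun hlt => (show f y < c from hlt).le) fun hyF => (hF y hyF).le
  have hconv : Convex ℝ ({y | f y < c} ∪ F) := by
    refine convex_iff_forall_pos.2 fun y hy z hz a b ha hb hab => ?_
    have hcombo : f (a • y + b • z) = a * f y + b * f z := Convex.combo_affine_apply hab
    have hc : c = a * c + b * c := by rw [← add_mul, hab, one_mul]
    have hy' := mul_le_mul_of_nonneg_left (hle y hy) ha.le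
    have hz' := mul_le_mul_of_nonneg_left (hle z hz) hb.le
    rcases hy with hy | hy
    · have hlt := mul_lt_mul_of_pos_left (show f y < c from hy) ha
      exact Or.inl (show f _ < c by linarith)
    rcases hz with hz | hz
    · have hlt := mul_lt_mul_of_pos_left (show f z < c from hz) hb
      exact Or.inl (show f _ < c by linarith)
    · exact Or.inr (convex_convexHull ℝ _ hy hz ha.le hb.le hab)
  refine convexHull_min (fun y hy => ?_) hconv hx
  exact (hA y hy).lt_or_eq.imp_right fun hfy => subset_convexHull ℝ _ ⟨hy, hfy⟩

lemma apply_le_of_mem_lowerFace (hm : ∀ y ∈ A, m y ≤ h y) (hx : x ∈ lowerFace A h ℓ) :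
    m x ≤ ℓ x := by
  have hsub : lowerFace A h ℓ ⊆ (m - ℓ) ⁻¹' Iic 0 :=
    convexHull_min (fun y hy => sub_nonpos.2 (hy.2 ▸ hm y hy.1))
      ((convex_Iic 0).affine_preimage (m - ℓ))
  exact sub_nonpos.1 (hsub hx)

lemma lowerFace_inter_lowerFace (hℓ : ∀ y ∈ A, ℓ y ≤ h y) (hm : ∀ y ∈ A, m y ≤ h y) :
    lowerFace A h ℓ ∩ lowerFace A h m = {x ∈ lowerFace A h ℓ | m x = ℓ x} := by
  ext x
  refine and_congr_right fun hx => ⟨fun hx' => ?_, fun heq => ?_⟩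
  · exact (apply_le_of_mem_lowerFace hm hx).antisymm (apply_le_of_mem_lowerFace hℓ hx')
  · have hle : ∀ y ∈ {y ∈ A | ℓ y = h y}, (m - ℓ) y ≤ 0 := fun y hy =>
      sub_nonpos.2 (hy.2 ▸ hm y hy.1)
    have hmem := (lt_or_mem_convexHull_of_forall_le hle hx).resolve_left
      (sub_eq_zero.2 heq).not_lt
    refine convexHull_mono ?_ hmem
    exact fun y hy => ⟨hy.1.1, (sub_eq_zero.1 hy.2).trans hy.1.2⟩

lemma eq_of_affineSpan_lowerFace_inter_eq_top (hℓ : ∀ y ∈ A, ℓ y ≤ h y) (hm : ∀ y ∈ A, m y ≤ h y)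
    (hspan : affineSpan ℝ (lowerFace A h ℓ ∩ lowerFace A h m) = ⊤) : m = ℓ :=
  AffineMap.ext_on hspan fun _ hx => ((lowerFace_inter_lowerFace hℓ hm).subset hx).2

lemma eventually_lt_add_mul_abs (hB : B.Finite) (hf : ∀ x ∈ B, f x < 0) :
    ∀ᶠ N : ℝ in atTop, ∀ x ∈ B, (ℓ + N • f) x < h x + N * |f x| := by
  refine (eventually_all_finite hB).2 fun x hx => ?_
  filter_upwards [eventually_gt_atTop ((h x - ℓ x) / (2 * f x))] with N hN
  rw [div_lt_iff_of_neg (by linarith [hf x hx])] at hN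
  simp only [AffineMap.coe_add, AffineMap.coe_smul, Pi.add_apply, Pi.smul_apply, smul_eq_mul,
    abs_of_neg (hf x hx)]
  linarith

end LowerFace

section AffineGeometry

lemma collinear_segment {E : Type*} [AddCommGroup E] [Module ℝ E] (p q : E) :
    Collinear ℝ (segment ℝ p q) := by
  rw [Collinear, ← convexHull_pair, ← direction_affineSpan, affineSpan_convexHull,
    direction_affineSpan]
  exact collinear_pair ℝ p q

lemma affineSpan_eq_top_of_not_collinear {E : Type*} [AddCommGroup E] [Module ℝ E]
    (hE : Module.finrank ℝ E = 2) {C : Set E} (hC : ¬ Collinear ℝ C) : affineSpan ℝ C = ⊤ := by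
  have : FiniteDimensional ℝ E := Module.finite_of_finrank_eq_succ hE
  have hne : C.Nonempty := nonempty_iff_ne_empty.2 fun h => hC (h ▸ collinear_empty ℝ E)
  rw [AffineSubspace.affineSpan_eq_top_iff_vectorSpan_eq_top_of_nonempty ℝ E E hne]
  rw [collinear_iff_finrank_le_one] at hC
  exact Submodule.eq_top_of_finrank_eq
    (le_antisymm (Submodule.finrank_le _) (hE ▸ not_le.1 hC))

lemma exists_affineMap_apply_eq {E : Type*} [AddCommGroup E] [Module ℝ E] {p q : E} (hpq : p ≠ q)
    (u v : ℝ) : ∃ a : E →ᵃ[ℝ] ℝ, a p = u ∧ a q = v := by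
  obtain ⟨g, hg⟩ := Module.Projective.exists_dual_eq_one ℝ (sub_ne_zero.2 hpq.symm)
  let coord : E →ᵃ[ℝ] ℝ := g.toAffineMap - AffineMap.const ℝ E (g p)
  have hp : coord p = 0 := sub_self (g p)
  have hq : coord q = 1 := (map_sub g q p).symm.trans hg
  exact ⟨(AffineMap.lineMap u v).comp coord, by simp [hp], by simp [hq]⟩

lemma isExposed_sep_eq_of_forall_le {E : Type*} [AddCommGroup E] [Module ℝ E] [TopologicalSpace E]
    [IsTopologicalAddGroup E] [ContinuousSMul ℝ E] [T2Space E] [FiniteDimensional ℝ E]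
    {C : Set E} {ℓ m : E →ᵃ[ℝ] ℝ} (hle : ∀ x ∈ C, m x ≤ ℓ x) :
    IsExposed ℝ C {x ∈ C | m x = ℓ x} := by
  rintro ⟨z, hzC, hz⟩
  have hsub : ∀ x y, (m - ℓ).linear x - (m - ℓ).linear y = (m x - ℓ x) - (m y - ℓ y) :=
    fun x y => (map_sub _ x y).symm.trans ((m - ℓ).linearMap_vsub x y)
  refine ⟨LinearMap.toContinuousLinearMap (m - ℓ).linear, ?_⟩
  ext x
  refine and_congr_right fun hx => ⟨fun heq y hy => ?_, fun hmax => ?_⟩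
  · exact sub_nonneg.1 (by
      rw [LinearMap.coe_toContinuousLinearMap', hsub]; linarith [hle y hy])
  · have := sub_nonneg.2 (hmax z hzC)
    rw [LinearMap.coe_toContinuousLinearMap', hsub] at this
    linarith [hle x hx]

lemma neg_of_mem_diff_of_convex_union {E : Type*} [AddCommGroup E] [Module ℝ E]
    [TopologicalSpace E] [IsTopologicalAddGroup E] [ContinuousSMul ℝ E] {P Q : Set E}
    {f : E →ᵃ[ℝ] ℝ} {x y : E} (hP : IsClosed P) (hQ : IsClosed Q) (hconv : Convex ℝ (P ∪ Q))
    (hf : ∀ z ∈ P ∩ Q, f z = 0) (hx : x ∈ P) (hfx : 0 < f x) (hy : y ∈ Q \ P) : f y < 0 := by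
  obtain ⟨z, ⟨a, b, ha, hb, hab, rfl⟩, hzP, hzQ⟩ :=
    isPreconnected_closed_iff.1 (convex_segment (𝕜 := ℝ) x y).isPreconnected P Q hP hQ
      (hconv.segment_subset (Or.inl hx) (Or.inr hy.1))
      ⟨x, left_mem_segment ℝ x y, hx⟩ ⟨y, right_mem_segment ℝ x y, hy.1⟩
  have ha' : 0 < a := ha.lt_of_ne' fun h0 => hy.2 <| by
    simpa only [h0, zero_smul, zero_add, (zero_add b).symm.trans (h0 ▸ hab), one_smul] using hzP
  have hzero : a * f x + b * f y = 0 :=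
    (Convex.combo_affine_apply (f := f) hab).symm.trans (hf _ ⟨hzP, hzQ⟩)
  by_contra! hfy
  linarith [mul_pos ha' hfx, mul_nonneg hb hfy]

lemma exists_affineSpan_inter_eq_top {E : Type*} [NormedAddCommGroup E] [NormedSpace ℝ E]
    [FiniteDimensional ℝ E] {C : Set E} {Δ : Set (Set E)} (hC : Convex ℝ C)
    (hspan : affineSpan ℝ C = ⊤) (hΔ : Δ.Countable) (hcover : C ⊆ ⋃₀ Δ) :
    ∃ D ∈ Δ, affineSpan ℝ (C ∩ D) = ⊤ := by
  borelize E
  by_contra! hproper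
  have hnull : ∀ D ∈ Δ, Measure.addHaar (C ∩ D) = 0 := fun D hD =>
    measure_mono_null (subset_affineSpan ℝ _) (Measure.addHaar_affineSubspace _ _ (hproper D hD))
  have hsub : interior C ⊆ ⋃ D ∈ Δ, C ∩ D := by
    rw [← inter_iUnion₂, ← sUnion_eq_biUnion]
    exact subset_inter interior_subset (interior_subset.trans hcover)
  exact (isOpen_interior.measure_pos Measure.addHaar
    (hC.interior_nonempty_iff_affineSpan_eq_top.2 hspan)).ne'
    (measure_mono_null hsub ((measure_biUnion_null_iff hΔ).2 hnull))

end AffineGeometry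

section LatticePolygon

variable {P : Set (ℝ × ℝ)}

lemma IsLatticePolygon.isCompact (hP : IsLatticePolygon P) : IsCompact P := by
  obtain ⟨S, -, rfl⟩ := hP
  exact S.finite_toSet.isCompact_convexHull (𝕜 := ℝ)

lemma finite_latticePoints (hP : IsCompact P) : (latticePoints P).Finite := by
  have htendsto : Tendsto (Prod.map ((↑) : ℤ → ℝ) ((↑) : ℤ → ℝ)) cofinite (cocompact (ℝ × ℝ)) := by
    rw [← coprod_cofinite, ← coprod_cocompact]
    exact Int.tendsto_coe_cofinite.prodMap_coprod Int.tendsto_coe_cofinite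
  have hfin : (Prod.map ((↑) : ℤ → ℝ) ((↑) : ℤ → ℝ) ⁻¹' P).Finite := by
    simpa [mem_cofinite] using htendsto hP.compl_mem_cocompact
  refine (hfin.image (Prod.map (↑) (↑))).subset ?_
  rintro x ⟨hx, a, b, rfl⟩
  exact ⟨(a, b), hx, rfl⟩

lemma latticePoints_union (P Q : Set (ℝ × ℝ)) :
    latticePoints (P ∪ Q) = latticePoints P ∪ latticePoints Q :=
  ext fun _ => or_and_right

lemma IsSubdivision.isCompact {Δ : Set (Set (ℝ × ℝ))} (hΔ : IsSubdivision P Δ) : IsCompact P :=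
  hΔ.2.2.1 ▸ hΔ.1.isCompact_sUnion fun C hC => (hΔ.2.1 C hC).1.isCompact

lemma IsSubdivision.not_collinear {Δ : Set (Set (ℝ × ℝ))} (hΔ : IsSubdivision P Δ)
    (hP : P.Nonempty) : ¬ Collinear ℝ P := by
  obtain ⟨-, hcells, rfl, -⟩ := hΔ
  obtain ⟨x, C, hC, -⟩ := hP
  exact fun hcol => (hcells C hC).2 (hcol.subset (subset_sUnion_of_mem hC))

end LatticePolygon

section InducedCells

variable {A B : Set (ℝ × ℝ)} {h h' : ℝ × ℝ → ℝ}

lemma inducedCells_congr (hh : EqOn h h' A) : inducedCells A h = inducedCells A h' := by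
  ext C
  refine and_congr_left' <| exists_congr fun ℓ =>
    and_congr (forall₂_congr fun x hx => by rw [hh hx]) ?_
  exact iff_of_eq (congrArg (C = ·) (lowerFace_congr hh))

lemma inducedCells_add_affineMap_subset (A : Set (ℝ × ℝ)) (h : ℝ × ℝ → ℝ)
    (a : (ℝ × ℝ) →ᵃ[ℝ] ℝ) : inducedCells A h ⊆ inducedCells A (h + a) := by
  rintro C ⟨⟨ℓ, hℓ, hC⟩, hdim⟩
  have hle : ∀ x ∈ A, (ℓ + a) x ≤ (h + a) x := fun x hx => add_le_add_left (hℓ x hx) (a x)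
  exact ⟨⟨ℓ + a, hle, hC.trans lowerFace_add_affineMap.symm⟩, hdim⟩

lemma inducedCells_add_affineMap (A : Set (ℝ × ℝ)) (h : ℝ × ℝ → ℝ) (a : (ℝ × ℝ) →ᵃ[ℝ] ℝ) :
    inducedCells A (h + a) = inducedCells A h := by
  refine Subset.antisymm ?_ (inducedCells_add_affineMap_subset A h a)
  simpa using inducedCells_add_affineMap_subset A (h + a) (-a)

lemma inducedCells_finite (hA : A.Finite) : (inducedCells A h).Finite := by
  refine (hA.finite_subsets.image (convexHull ℝ)).subset ?_
  rintro C ⟨⟨ℓ, -, rfl⟩, -⟩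
  exact mem_image_of_mem _ (sep_subset _ _)

lemma exists_common_height_of_eq_add_affineMap {h₁ h₂ : ℝ × ℝ → ℝ} {a : (ℝ × ℝ) →ᵃ[ℝ] ℝ}
    (ha : ∀ x ∈ A ∩ B, h₁ x = h₂ x + a x) :
    ∃ h, inducedCells A h₁ = inducedCells A h ∧ inducedCells B h₂ = inducedCells B h := by
  classical
  refine ⟨A.piecewise h₁ (h₂ + a), inducedCells_congr (A.piecewise_eqOn _ _).symm, ?_⟩
  rw [← inducedCells_add_affineMap B h₂ a]
  refine inducedCells_congr fun x hxB => ?_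
  by_cases hxA : x ∈ A
  · exact ((piecewise_eq_of_mem _ _ _ hxA).trans (ha x ⟨hxA, hxB⟩)).symm
  · exact (piecewise_eq_of_notMem _ _ _ hxA).symm

lemma isLatticePolygon_of_mem_inducedCells {P C : Set (ℝ × ℝ)} (hP : IsCompact P)
    (hC : C ∈ inducedCells (latticePoints P) h) : IsLatticePolygon C := by
  obtain ⟨⟨ℓ, -, hC⟩, -⟩ := hC
  have hfin := (finite_latticePoints hP).subset (sep_subset _ (fun x => ℓ x = h x))
  exact ⟨hfin.toFinset, fun x hx => (hfin.mem_toFinset.1 hx).1.2, by rwa [hfin.coe_toFinset]⟩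

lemma isExposed_inter_of_mem_inducedCells {C D : Set (ℝ × ℝ)} (hC : C ∈ inducedCells A h)
    (hD : D ∈ inducedCells A h) : IsExposed ℝ C (C ∩ D) := by
  obtain ⟨⟨ℓ, hℓ, hCℓ⟩, -⟩ := hC
  obtain ⟨⟨m, hm, hDm⟩, -⟩ := hD
  rw [← lowerFace] at hCℓ hDm
  rw [hCℓ, hDm, lowerFace_inter_lowerFace hℓ hm]
  exact isExposed_sep_eq_of_forall_le fun x hx => apply_le_of_mem_lowerFace hm hx

lemma eq_inducedCells_of_cover {Δ : Set (Set (ℝ × ℝ))} (hΔ : Δ.Countable) (hA : A ⊆ ⋃₀ Δ)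
    (hconv : Convex ℝ (⋃₀ Δ)) (hsub : Δ ⊆ inducedCells A h) : Δ = inducedCells A h := by
  refine hsub.antisymm ?_
  rintro C ⟨⟨ℓ, hℓ, hCℓ⟩, hdim⟩
  have hspan : affineSpan ℝ C = ⊤ := affineSpan_eq_top_of_not_collinear (by simp) hdim
  have hcover : C ⊆ ⋃₀ Δ := hCℓ ▸ lowerFace_subset_convexHull.trans (convexHull_min hA hconv)
  obtain ⟨D, hD, hCD⟩ :=
    exists_affineSpan_inter_eq_top (hCℓ ▸ convex_convexHull ℝ _) hspan hΔ hcover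
  obtain ⟨⟨m, hm, hDm⟩, -⟩ := hsub hD
  rw [hCℓ, hDm] at hCD
  obtain rfl : m = ℓ := eq_of_affineSpan_lowerFace_inter_eq_top hℓ hm hCD
  rwa [hCℓ, ← hDm]

lemma isRegularSubdivision_of_subset_inducedCells {P : Set (ℝ × ℝ)} {Δ : Set (Set (ℝ × ℝ))}
    (hP : IsCompact P) (hconv : Convex ℝ P) (hcover : ⋃₀ Δ = P)
    (hsub : Δ ⊆ inducedCells (latticePoints P) h) : IsRegularSubdivision P Δ := by
  have hfin : Δ.Finite := (inducedCells_finite (finite_latticePoints hP)).subset hsub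
  refine ⟨⟨hfin, fun C hC => ?_, hcover, fun C hC D hD => ?_⟩, h, ?_⟩
  · exact ⟨isLatticePolygon_of_mem_inducedCells hP (hsub hC), (hsub hC).2⟩
  · exact ⟨isExposed_inter_of_mem_inducedCells (hsub hC) (hsub hD),
      inter_comm D C ▸ isExposed_inter_of_mem_inducedCells (hsub hD) (hsub hC)⟩
  · subst hcover
    exact eq_inducedCells_of_cover hfin.countable (sep_subset _ _) hconv hsub

end InducedCells

section Gluing

variable {A B : Set (ℝ × ℝ)} {f : (ℝ × ℝ) →ᵃ[ℝ] ℝ}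

lemma eventually_inducedCells_subset_union (h : ℝ × ℝ → ℝ) (hA : A.Finite) (hB : B.Finite)
    (hfA : ∀ x ∈ A, 0 ≤ f x) (hfB : ∀ x ∈ B \ A, f x < 0) :
    ∀ᶠ N : ℝ in atTop, inducedCells A h ⊆ inducedCells (A ∪ B) fun x => h x + N * |f x| := by
  refine (eventually_all_finite (inducedCells_finite hA)).2 ?_
  rintro C ⟨⟨ℓ, hℓ, hC⟩, hdim⟩
  filter_upwards [eventually_lt_add_mul_abs (ℓ := ℓ) (h := h) hB.sdiff hfB] with N hN
  have hshift : EqOn (fun x => h x + N * |f x|) (h + N • f) A := fun x hx => by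
    simp [abs_of_nonneg (hfA x hx)]
  have hface : lowerFace (A ∪ B) (fun x => h x + N * |f x|) (ℓ + N • f) = lowerFace A h ℓ := by
    rw [lowerFace_union_of_lt hN, lowerFace_congr hshift]
    exact lowerFace_add_affineMap
  refine ⟨⟨ℓ + N • f, fun x hx => ?_, hC.trans hface.symm⟩, hdim⟩
  by_cases hxA : x ∈ A
  · rw [hshift hxA]
    exact add_le_add_left (hℓ x hxA) _
  · exact (hN x ⟨hx.resolve_left hxA, hxA⟩).le

lemma exists_inducedCells_union_subset (h : ℝ × ℝ → ℝ) (hA : A.Finite) (hB : B.Finite)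
    (hfA : ∀ x ∈ A \ B, 0 < f x) (hfB : ∀ x ∈ B \ A, f x < 0) (hfAB : ∀ x ∈ A ∩ B, f x = 0) :
    ∃ h', inducedCells A h ∪ inducedCells B h ⊆ inducedCells (A ∪ B) h' := by
  have hnonneg : ∀ x ∈ A, 0 ≤ f x := fun x hx =>
    (em (x ∈ B)).elim (fun hxB => (hfAB x ⟨hx, hxB⟩).ge) fun hxB => (hfA x ⟨hx, hxB⟩).le
  have hnonpos : ∀ x ∈ B, 0 ≤ (-f) x := fun x hx => neg_nonneg.2 <|
    (em (x ∈ A)).elim (fun hxA => (hfAB x ⟨hxA, hx⟩).le) fun hxA => (hfB x ⟨hx, hxA⟩).le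
  have hneg : ∀ x ∈ A \ B, (-f) x < 0 := fun x hx => neg_lt_zero.2 (hfA x hx)
  obtain ⟨N, hNA, hNB⟩ := ((eventually_inducedCells_subset_union h hA hB hnonneg hfB).and
    (eventually_inducedCells_subset_union h hB hA hnonpos hneg)).exists
  simp only [AffineMap.coe_neg, Pi.neg_apply, abs_neg, union_comm B A] at hNB
  exact ⟨_, union_subset hNA hNB⟩

lemma LatticeLengthOne.exists_common_height {P₁ P₂ : Set (ℝ × ℝ)} {p q : ℝ × ℝ}
    (hlen : LatticeLengthOne p q) (hcap : P₁ ∩ P₂ = segment ℝ p q) (h₁ h₂ : ℝ × ℝ → ℝ) :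
    ∃ h, inducedCells (latticePoints P₁) h₁ = inducedCells (latticePoints P₁) h ∧
      inducedCells (latticePoints P₂) h₂ = inducedCells (latticePoints P₂) h := by
  obtain ⟨hne, -, -, hends⟩ := hlen
  obtain ⟨a, hap, haq⟩ := exists_affineMap_apply_eq hne (h₁ p - h₂ p) (h₁ q - h₂ q)
  refine exists_common_height_of_eq_add_affineMap (a := a) fun x hx => ?_
  rcases hends x (hcap.subset ⟨hx.1.1, hx.2.1⟩) hx.1.2 with rfl | rfl
  · rw [hap, add_sub_cancel]
  · rw [haq, add_sub_cancel]

theorem regular_subdivision_glue_general {P₁ P₂ : Set (ℝ × ℝ)} {Δ₁ Δ₂ : Set (Set (ℝ × ℝ))}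
    {p q : ℝ × ℝ} {h : ℝ × ℝ → ℝ} (hΔ₁ : IsSubdivision P₁ Δ₁) (hΔ₂ : IsSubdivision P₂ Δ₂)
    (hh₁ : Δ₁ = inducedCells (latticePoints P₁) h) (hh₂ : Δ₂ = inducedCells (latticePoints P₂) h)
    (hcap : P₁ ∩ P₂ = segment ℝ p q) (hedge : IsEdgeSeg P₁ p q) (hconv : Convex ℝ (P₁ ∪ P₂)) :
    IsRegularSubdivision (P₁ ∪ P₂) (Δ₁ ∪ Δ₂) := by
  obtain ⟨hseg, f, hzero, hpos⟩ := hedge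
  have hc₁ := hΔ₁.isCompact
  have hc₂ := hΔ₂.isCompact
  obtain ⟨x, hx, hxseg⟩ := not_subset.1 fun hsub =>
    hΔ₁.not_collinear ⟨p, hseg (left_mem_segment ℝ p q)⟩ ((collinear_segment p q).subset hsub)
  rw [← hcap] at hzero hpos hxseg
  have hneg : ∀ y ∈ P₂ \ P₁, f y < 0 := fun y => neg_of_mem_diff_of_convex_union hc₁.isClosed
    hc₂.isClosed hconv hzero hx (hpos x ⟨hx, hxseg⟩)
  obtain ⟨h', hsub⟩ := exists_inducedCells_union_subset h (finite_latticePoints hc₁)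
    (finite_latticePoints hc₂)
    (fun y hy => hpos y ⟨hy.1.1, fun hy' => hy.2 ⟨hy'.2, hy.1.2⟩⟩)
    (fun y hy => hneg y ⟨hy.1.1, fun hy' => hy.2 ⟨hy', hy.1.2⟩⟩)
    (fun y hy => hzero y ⟨hy.1.1, hy.2.1⟩)
  rw [← hh₁, ← hh₂, ← latticePoints_union] at hsub
  exact isRegularSubdivision_of_subset_inducedCells (hc₁.union hc₂) hconv
    (by rw [sUnion_union, hΔ₁.2.2.1, hΔ₂.2.2.1]) hsub

end Gluing

/-- Gluing two regular subdivisions of two-dimensional lattice polygons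
along a common edge of lattice length one yields a regular subdivision of the
(convex) union. -/
theorem regular_subdivision_glue
    (P₁ P₂ : Set (ℝ × ℝ)) (Δ₁ Δ₂ : Set (Set (ℝ × ℝ))) (p q : ℝ × ℝ)
    (hP₁ : IsLatticePolygon P₁) (hP₂ : IsLatticePolygon P₂)
    (hdim₁ : ¬ Collinear ℝ P₁) (hdim₂ : ¬ Collinear ℝ P₂)
    (hΔ₁ : IsRegularSubdivision P₁ Δ₁) (hΔ₂ : IsRegularSubdivision P₂ Δ₂)
    (hpq : IsLatticePoint p ∧ IsLatticePoint q)
    (hcap : P₁ ∩ P₂ = segment ℝ p q)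
    (hlen : LatticeLengthOne p q)
    (hedge₁ : IsEdgeSeg P₁ p q) (hedge₂ : IsEdgeSeg P₂ p q)
    (hconv : Convex ℝ (P₁ ∪ P₂)) :
    IsRegularSubdivision (P₁ ∪ P₂) (Δ₁ ∪ Δ₂) := by
  obtain ⟨hΔ₁, h₁, rfl⟩ := hΔ₁
  obtain ⟨hΔ₂, h₂, rfl⟩ := hΔ₂
  obtain ⟨h, hh₁, hh₂⟩ := hlen.exists_common_height hcap h₁ h₂
  exact regular_subdivision_glue_general hΔ₁ hΔ₂ hh₁ hh₂ hcap hedge₁ hconv
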